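/- The linear map (X̂, Ŷ) ↦ Â(X̂) + B̂(Ŷ) from S^{n+1} × S^{n+1} to ℝ^{ñ₁} is surjective; i.e., { Â(X̂) + B̂(Ŷ) : X̂, Ŷ ∈ S^{n+1} } = ℝ^{ñ₁}. -/

import Mathlib

open Matrix BigOperators

noncomputable section

/-- Real square matrices of size `k`. -/
abbrev Mat (k : ℕ) : Type := Matrix (Fin k) (Fin k) ℝ

/-- `dgE P q` is the block-diagonal `(n+1) × (n+1)` matrix `diag(P, q)`. -/
def dgE {n : ℕ} (P : Mat n) (q : ℝ) : Mat (n + 1) :=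
  Matrix.of fun i j =>
    if hi : (i : ℕ) < n then
      (if hj : (j : ℕ) < n then P ⟨i, hi⟩ ⟨j, hj⟩ else 0)
    else (if (j : ℕ) < n then 0 else q)

/-- Index type for `ℝ^{ñ₁}`, split as the first `m` coordinates, the next `n`
coordinates, and the last `ñ+1−m` (here `k`) coordinates; `ñ₁ = m + n + (ñ+1−m)`. -/
abbrev SIdx (n m k : ℕ) : Type := Fin m ⊕ Fin n ⊕ Fin k

/-- The linear map `Â : S^{n+1} → ℝ^{ñ₁}` of the sSDLCP. -/
def Ahat {n m k : ℕ} (A : Fin m → Mat n) (b : Fin m → ℝ) (Xh : Mat (n + 1)) :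
    SIdx n m k → ℝ
  | Sum.inl i => (dgE (A i) (-(b i)) * Xh).trace
  | Sum.inr (Sum.inl i) => Xh i.castSucc (Fin.last n)
  | Sum.inr (Sum.inr _) => 0

/-- The linear map `B̂ : S^{n+1} → ℝ^{ñ₁}` of the sSDLCP, where `dd` is the vector `d`. -/
def Bhat {n m k : ℕ} (B : Fin k → Mat n) (dd : Fin k → ℝ) (Yh : Mat (n + 1)) :
    SIdx n m k → ℝ
  | Sum.inl _ => 0
  | Sum.inr (Sum.inl _) => 0
  | Sum.inr (Sum.inr j) => (dgE (B j) (dd j) * Yh).trace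


/-- Linearly independent symmetric matrices: the trace functionals are jointly onto. -/
theorem gram_surj {n : ℕ} {ι : Type} [Fintype ι] (C : ι → Mat n)
    (hs : ∀ i, (C i).IsSymm) (hli : LinearIndependent ℝ C) (r : ι → ℝ) :
    ∃ X : Mat n, X.IsSymm ∧ ∀ i, (C i * X).trace = r i := by
  classical
  let S : (ι → ℝ) →ₗ[ℝ] Mat n := Fintype.linearCombination ℝ C
  have hS : ∀ c, S c = ∑ i, c i • C i := fun c => Fintype.linearCombination_apply ℝ C c
  have hSs : ∀ c, (S c).IsSymm := by
    intro c
    rw [hS, Matrix.IsSymm, Matrix.transpose_sum]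
    exact Finset.sum_congr rfl fun i _ => by rw [Matrix.transpose_smul, (hs i).eq]
  let L : (ι → ℝ) →ₗ[ℝ] (ι → ℝ) :=
    LinearMap.pi fun i => (Matrix.traceLinearMap (Fin n) ℝ ℝ) ∘ₗ (LinearMap.mulLeft ℝ (C i)) ∘ₗ S
  have hL : ∀ c i, L c i = (C i * S c).trace := fun c i => rfl
  have hinj : Function.Injective L := by
    rw [injective_iff_map_eq_zero]
    intro c hc
    have h1 : ((S c)ᵀ * S c).trace = 0 := by
      rw [(hSs c).eq]
      nth_rewrite 1 [hS c]
      rw [Finset.sum_mul, Matrix.trace_sum]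
      refine Finset.sum_eq_zero fun i _ => ?_
      rw [Matrix.smul_mul, Matrix.trace_smul, ← hL, hc]
      simp
    have h2 : S c = 0 := by
      rw [← Matrix.conjTranspose_eq_transpose_of_trivial] at h1
      exact Matrix.trace_conjTranspose_mul_self_eq_zero_iff.mp h1
    rw [hS] at h2
    funext i
    exact Fintype.linearIndependent_iff.mp hli c h2 i
  obtain ⟨c, hc⟩ := (LinearMap.injective_iff_surjective.mp hinj) r
  exact ⟨S c, hSs c, fun i => by rw [← hL, hc]⟩

/-- The bordered matrix `[[X, x], [xᵀ, y]]`. -/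
def bord {n : ℕ} (X : Mat n) (x : Fin n → ℝ) (y : ℝ) : Mat (n + 1) :=
  Matrix.of fun i j => Fin.lastCases (Fin.lastCases y x j)
    (fun a => Fin.lastCases (x a) (fun c => X a c) j) i

theorem bord_symm {n : ℕ} (X : Mat n) (hX : X.IsSymm) (x : Fin n → ℝ) (y : ℝ) :
    (bord X x y).IsSymm := by
  ext i j
  induction i using Fin.lastCases <;> induction j using Fin.lastCases <;>
    simp [bord, hX.apply]

theorem bord_trace {n : ℕ} (P X : Mat n) (q : ℝ) (x : Fin n → ℝ) (y : ℝ) :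
    (dgE P q * bord X x y).trace = (P * X).trace + q * y := by
  simp [Matrix.trace, Matrix.mul_apply, Fin.sum_univ_castSucc, dgE, bord]

/-- The linear map `(X̂, Ŷ) ↦ Â(X̂) + B̂(Ŷ)` from `S^{n+1} × S^{n+1}`
to `ℝ^{ñ₁}` is surjective.  (Here `ñ` is written `nt`; `B j` denotes `B_{j+1}`, so
`B 0 = B₁`, and `d = (d₁, 0, …, 0)`.) -/
theorem sSDLCP_map_surjective
    (n m nt : ℕ) (hm1 : 1 ≤ m) (hmn : m ≤ nt) (hnt : nt = n * (n + 1) / 2)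
    (A : Fin m → Mat n) (b : Fin m → ℝ)
    (B : Fin (nt - m + 1) → Mat n) (d1 : ℝ)
    (hAsymm : ∀ i, (A i).IsSymm) (hAli : LinearIndependent ℝ A)
    (hBsymm : ∀ j, (B j).IsSymm)
    (hd1 : d1 ≠ 0)
    (hB1A : ∀ i, -(d1 * b i) + (B 0 * A i).trace = 0)
    (hBli : LinearIndependent ℝ (fun j : {j : Fin (nt - m + 1) // j ≠ 0} => B j.1))
    (hBspan : ∀ W : Mat n,
        W ∈ Submodule.span ℝ (B '' {j | j ≠ 0}) ↔
          (W.IsSymm ∧ ∀ i, (W * A i).trace = 0))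
    :
    ∀ r : SIdx n m (nt - m + 1) → ℝ,
      ∃ Xh Yh : Mat (n + 1), Xh.IsSymm ∧ Yh.IsSymm ∧
        ∀ idx, Ahat A b Xh idx +
            Bhat B (fun j => if j = 0 then d1 else 0) Yh idx = r idx := by
  intro r
  obtain ⟨X, hX, hXr⟩ := gram_surj A hAsymm hAli (fun i => r (Sum.inl i))
  obtain ⟨Y, hY, hYr⟩ := gram_surj (fun j : {j : Fin (nt - m + 1) // j ≠ 0} => B j.1)
    (fun j => hBsymm j.1) hBli (fun j => r (Sum.inr (Sum.inr j.1)))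
  refine ⟨bord X (fun i => r (Sum.inr (Sum.inl i))) 0,
    bord Y 0 ((r (Sum.inr (Sum.inr 0)) - (B 0 * Y).trace) / d1),
    bord_symm _ hX _ _, bord_symm _ hY _ _, ?_⟩
  rintro (i | i | j)
  · simp [Ahat, Bhat, bord_trace, hXr]
  · simp [Ahat, Bhat, bord]
  · simp only [Ahat, Bhat, bord_trace, zero_add]
    by_cases hj : j = 0
    · subst hj
      rw [if_pos rfl]
      field_simp
      ring
    · rw [if_neg hj, zero_mul, add_zero]
      exact hYr ⟨j, hj⟩

end
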